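/- arXiv:2202.01590 — 2 statements merged into one kernel-verified Lean document; each statement's English description precedes it below -/
import Mathlib

section
/- For every t ∈ (0, t₀), every λ ∈ [0,1] and every x ∈ Ω'', it holds L_{t,λ}(x) ≤ √(C*·t). -/
open Metric Filter Set Topology

/-- The Hopf–Lax-type function `f_t(x,λ) = inf_{y ∈ Ω'} { e^{-2Kλ} d(x,y)²/(2t) - d_Y(u(x),u(y)) }`. -/
noncomputable def fT {X Y : Type*} [MetricSpace X] [MetricSpace Y]
    (Ω' : Set X) (u : X → Y) (K t lam : ℝ) (x : X) : ℝ :=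
  ⨅ y : Ω', (Real.exp (-2 * K * lam) * dist x (y : X) ^ 2 / (2 * t) - dist (u x) (u (y : X)))

/-- The set `S_t(x,λ)` of points of `Ω'` attaining the infimum defining `f_t(x,λ)`. -/
noncomputable def minSet {X Y : Type*} [MetricSpace X] [MetricSpace Y]
    (Ω' : Set X) (u : X → Y) (K t lam : ℝ) (x : X) : Set X :=
  {y ∈ Ω' | fT Ω' u K t lam x
    = Real.exp (-2 * K * lam) * dist x y ^ 2 / (2 * t) - dist (u x) (u y)}

/-- `L_{t,λ}(x) := min { d(x,y) : y ∈ S_t(x,λ) }` (as an infimum, which is attained). -/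
noncomputable def minDist {X Y : Type*} [MetricSpace X] [MetricSpace Y]
    (Ω' : Set X) (u : X → Y) (K t lam : ℝ) (x : X) : ℝ :=
  sInf ((fun y => dist x y) '' minSet Ω' u K t lam x)

theorem stmt3 {X Y : Type*} [MetricSpace X] [ProperSpace X] [MetricSpace Y]
    (Ω' Ω'' : Set X) (hΩ'open : IsOpen Ω') (hΩ'bdd : Bornology.IsBounded Ω')
    (hΩ'ne : Ω'.Nonempty) (hΩ''open : IsOpen Ω'') (hΩ''ne : Ω''.Nonempty)
    (hsub : Ω'' ⊆ Ω')
    (u : X → Y) (hu : ContinuousOn u Ω')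
    (osc : ℝ)
    (hoscBdd : BddAbove ((fun p : X × X => dist (u p.1) (u p.2)) '' (Ω' ×ˢ Ω')))
    (hosc : osc = sSup ((fun p : X × X => dist (u p.1) (u p.2)) '' (Ω' ×ˢ Ω')))
    (K : ℝ) (hK : K ≤ 0)
    (D : ℝ) (hD : D = sInf ((fun p : X × X => dist p.1 p.2) '' (Ω'' ×ˢ Ω'ᶜ)))
    (hDpos : 0 < D)
    (Cstar t₀ : ℝ) (hC : Cstar = 2 * osc + 2) (ht₀ : t₀ = D ^ 2 / (4 * Cstar)) :
    ∀ t ∈ Ioo (0 : ℝ) t₀, ∀ lam ∈ Icc (0 : ℝ) 1, ∀ x ∈ Ω'',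
      minDist Ω' u K t lam x ≤ Real.sqrt (Cstar * t) := by
  intro t ht lam hlam x hx
  obtain ⟨ht0, -⟩ := ht
  have hxΩ : x ∈ Ω' := hsub hx
  have hle : ∀ y ∈ Ω', dist (u x) (u y) ≤ osc := by
    intro y hy
    rw [hosc]
    exact le_csSup hoscBdd ⟨(x, y), ⟨hxΩ, hy⟩, rfl⟩
  have hosc0 : 0 ≤ osc := dist_nonneg.trans (hle x hxΩ)
  unfold minDist
  rcases (minSet Ω' u K t lam x).eq_empty_or_nonempty with he | ⟨y, hy⟩
  · rw [he, image_empty, Real.sInf_empty]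
    exact Real.sqrt_nonneg _
  · have hbdd : BddBelow ((fun y => dist x y) '' minSet Ω' u K t lam x) :=
      ⟨0, by rintro _ ⟨z, -, rfl⟩; exact dist_nonneg⟩
    refine (csInf_le hbdd ⟨y, hy, rfl⟩).trans ?_
    obtain ⟨hyΩ, hyf⟩ := hy
    apply Real.le_sqrt_of_sq_le
    have hf : fT Ω' u K t lam x ≤ 0 := by
      have hb : BddBelow (range fun y : Ω' =>
          (Real.exp (-2 * K * lam) * dist x (y : X) ^ 2 / (2 * t)
            - dist (u x) (u (y : X)))) := by
        refine ⟨-osc, ?_⟩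
        rintro _ ⟨z, rfl⟩
        have h1 := hle z z.2
        have h2 : 0 ≤ Real.exp (-2 * K * lam) * dist x (z : X) ^ 2 / (2 * t) := by positivity
        show -osc ≤ _ - _
        linarith
      have h := ciInf_le hb ⟨x, hxΩ⟩
      simpa [fT] using h
    have hexp : 1 ≤ Real.exp (-2 * K * lam) := by
      apply Real.one_le_exp
      nlinarith [mul_nonneg (neg_nonneg.2 hK) hlam.1]
    have h1 := hle y hyΩ
    have h2 : Real.exp (-2 * K * lam) * dist x y ^ 2 / (2 * t) ≤ osc := by linarith
    rw [div_le_iff₀ (by positivity)] at h2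
    have h3 : dist x y ^ 2 ≤ Real.exp (-2 * K * lam) * dist x y ^ 2 :=
      le_mul_of_one_le_left (sq_nonneg _) hexp
    show dist x y ^ 2 ≤ Cstar * t
    rw [hC]
    nlinarith
end

section
/- Let n ≥ 1 and let N be a seminorm on ℝⁿ. Then (4π)^{−n/2} · ∫_{ℝⁿ} e^{−|v|²/4} · N(v)² dv = 2(n+2) · (1/vol(B₁(0))) · ∫_{B₁(0)} N(v)² dv, where B₁(0) is the Euclidean unit ball and vol denotes Lebesgue measure. -/
open Metric MeasureTheory

lemma polar_aux (n : ℕ) (N : Seminorm ℝ (EuclideanSpace ℝ (Fin n))) (g : ℝ → ℝ) (hn : 1 ≤ n) :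
    ∫ v : EuclideanSpace ℝ (Fin n), g ‖v‖ * (N v) ^ 2 =
      (∫ x : sphere (0 : EuclideanSpace ℝ (Fin n)) 1, (N x.1) ^ 2
        ∂(volume : Measure (EuclideanSpace ℝ (Fin n))).toSphere) *
      ∫ y in Set.Ioi (0 : ℝ), y ^ (n - 1) * (g y * y ^ 2) := by
  have : Nonempty (Fin n) := ⟨⟨0, hn⟩⟩
  calc
    _ = ∫ x : ({(0)}ᶜ : Set (EuclideanSpace ℝ (Fin n))), g ‖x.1‖ * (N x.1) ^ 2
          ∂(volume.comap Subtype.val) := by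
      rw [integral_subtype_comap (measurableSet_singleton _).compl
        fun x ↦ g ‖x‖ * (N x) ^ 2, restrict_compl_singleton]
    _ = ∫ x, (N x.1.1) ^ 2 * (g x.2.1 * x.2.1 ^ 2)
          ∂(volume : Measure (EuclideanSpace ℝ (Fin n))).toSphere.prod
            (.volumeIoiPow (Module.finrank ℝ (EuclideanSpace ℝ (Fin n)) - 1)) := by
      rw [← (volume : Measure (EuclideanSpace ℝ (Fin n))).measurePreserving_homeomorphUnitSphereProd.integral_comp
        (Homeomorph.measurableEmbedding _)]
      congr 1
      ext x
      have hx : ‖x.1‖ ≠ 0 := norm_ne_zero_iff.mpr x.2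
      simp only [homeomorphUnitSphereProd_apply_fst_coe, homeomorphUnitSphereProd_apply_snd_coe,
        map_smul_eq_mul, norm_inv, norm_norm]
      field_simp
    _ = _ := by
      rw [integral_prod_mul (fun x : sphere (0 : EuclideanSpace ℝ (Fin n)) 1 => (N x.1) ^ 2)
        (fun y : Set.Ioi (0 : ℝ) => g y.1 * y.1 ^ 2)]
      congr 1
      simp only [Measure.volumeIoiPow, ENNReal.ofReal]
      rw [integral_withDensity_eq_integral_smul, finrank_euclideanSpace, Fintype.card_fin,
        integral_subtype_comap measurableSet_Ioi
          fun a : ℝ ↦ Real.toNNReal (a ^ (n - 1)) • (g a * a ^ 2),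
        setIntegral_congr_fun measurableSet_Ioi fun x hx ↦ ?_]
      · simp only [NNReal.smul_def, Real.coe_toNNReal _ (pow_nonneg (le_of_lt hx) _), smul_eq_mul]
      · exact (measurable_subtype_coe.pow_const _).real_toNNReal

theorem stmt14 (n : ℕ) (hn : 1 ≤ n) (N : Seminorm ℝ (EuclideanSpace ℝ (Fin n))) :
    (4 * Real.pi) ^ (-(n : ℝ) / 2) *
        ∫ v : EuclideanSpace ℝ (Fin n), Real.exp (-‖v‖ ^ 2 / 4) * (N v) ^ 2 =
      2 * ((n : ℝ) + 2) *
        ((volume (ball (0 : EuclideanSpace ℝ (Fin n)) 1)).toReal)⁻¹ *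
        ∫ v in ball (0 : EuclideanSpace ℝ (Fin n)) 1, (N v) ^ 2 := by
  have : Nonempty (Fin n) := ⟨⟨0, hn⟩⟩
  have h1 := polar_aux n N (fun y => Real.exp (-y ^ 2 / 4)) hn
  have h2 := polar_aux n N (Set.indicator (Set.Iio 1) 1) hn
  have e2 : ∫ v in ball (0 : EuclideanSpace ℝ (Fin n)) 1, (N v) ^ 2 =
      ∫ v : EuclideanSpace ℝ (Fin n), (Set.indicator (Set.Iio (1:ℝ)) 1 ‖v‖ : ℝ) * (N v) ^ 2 := by
    rw [← integral_indicator measurableSet_ball]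
    congr 1
    ext v
    by_cases h : ‖v‖ < 1
    · rw [Set.indicator_of_mem (by simpa using h), Set.indicator_of_mem (by simpa using h)]
      simp
    · rw [Set.indicator_of_notMem (by simpa using h), Set.indicator_of_notMem (by simpa using h)]
      simp
  have e3 : ∫ y in Set.Ioi (0 : ℝ), y ^ (n - 1) * ((Set.indicator (Set.Iio (1:ℝ)) 1 y : ℝ) * y ^ 2)
      = 1 / ((n : ℝ) + 2) := by
    have : ∀ y : ℝ, y ^ (n - 1) * ((Set.indicator (Set.Iio (1:ℝ)) 1 y : ℝ) * y ^ 2) =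
        Set.indicator (Set.Iio (1:ℝ)) (fun y => y ^ (n + 1)) y := by
      intro y
      by_cases h : y < 1
      · simp only [Set.indicator_apply, Set.mem_Iio, h, if_true, Pi.one_apply, one_mul]
        rw [← pow_add]; congr 1; omega
      · simp [Set.indicator_apply, h]
    simp_rw [this]
    rw [setIntegral_indicator measurableSet_Iio, Set.Ioi_inter_Iio,
      ← integral_Ioc_eq_integral_Ioo, ← intervalIntegral.integral_of_le zero_le_one, integral_pow]
    simp
    ring
  have e1 : ∫ y in Set.Ioi (0 : ℝ), y ^ (n - 1) * (Real.exp (-y ^ 2 / 4) * y ^ 2) =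
      (1 / 4 : ℝ) ^ (-(((n + 1 : ℕ) : ℝ) + 1) / 2) * (1 / 2) *
        Real.Gamma ((((n + 1 : ℕ) : ℝ) + 1) / 2) := by
    rw [← integral_rpow_mul_exp_neg_mul_rpow (by norm_num)
      (by have : (0 : ℝ) ≤ ((n + 1 : ℕ) : ℝ) := Nat.cast_nonneg _
          linarith) (by norm_num)]
    refine setIntegral_congr_fun measurableSet_Ioi fun y hy => ?_
    simp only [Real.rpow_natCast, Real.rpow_two]
    rw [show n + 1 = (n - 1) + 2 by omega, pow_add,
      show -y ^ 2 / 4 = -(1 / 4) * y ^ 2 by ring]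
    ring
  rw [h1, e2, h2, e1, e3, EuclideanSpace.volume_ball]
  have hG : 0 < Real.Gamma ((n : ℝ) / 2 + 1) := Real.Gamma_pos_of_pos (by positivity)
  rw [show (((n + 1 : ℕ) : ℝ) + 1) / 2 = (n : ℝ) / 2 + 1 by push_cast; ring]
  rw [show -(((n + 1 : ℕ) : ℝ) + 1) / 2 = -((n : ℝ) / 2 + 1) by push_cast; ring]
  rw [one_div (4 : ℝ), Real.inv_rpow (by norm_num), Real.rpow_neg (by norm_num), inv_inv,
    Real.rpow_add_one (by norm_num), neg_div, Real.rpow_neg (by positivity),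
    Real.mul_rpow (by norm_num) Real.pi_pos.le]
  have hs : √Real.pi ^ n = Real.pi ^ ((n : ℝ) / 2) := by
    rw [Real.sqrt_eq_rpow, ← Real.rpow_natCast, ← Real.rpow_mul Real.pi_pos.le]
    congr 1; ring
  simp only [ENNReal.ofReal_one, one_pow, one_mul, Fintype.card_fin]
  rw [ENNReal.toReal_ofReal (by positivity), hs]
  have : 0 < Real.pi ^ ((n : ℝ) / 2) := Real.rpow_pos_of_pos Real.pi_pos _
  have : 0 < (4 : ℝ) ^ ((n : ℝ) / 2) := Real.rpow_pos_of_pos (by norm_num) _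
  field_simp
  try ring
end
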